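/- arXiv:0711.4849 — 2 statements merged into one kernel-verified Lean document; each statement's English description precedes it below -/
import Mathlib

section
/- Let (t, n, b) be a smooth right-handed orthonormal frame on an open set U ⊆ ℝ³ with Ω_b nowhere zero. For i = 1, 2 let α_i be smooth nowhere-zero scalar functions and μ_i smooth scalar functions on U, each μ_i satisfying the Riccati equation ∂_s μ_i = Ω_n + μ_i Ω_nb + μ_i² Ω_b (so that J_i = α_i(n + μ_i b) are Poisson vectors). If ∂_s ln(α₂/α₁) = (μ₁ − μ₂) Ω_b on U, then J₁ and J₂ are compatible: J₁·(curl J₂) + J₂·(curl J₁) = 0 on U. -/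
/-!
Write `Jᵢ = αᵢ vᵢ` with `vᵢ = n + μᵢ b`. The product rule for the curl and `n × b = t` give
`J₁·curl J₂ + J₂·curl J₁ = (μ₁ - μ₂) (α₁ ∂ₛα₂ - α₂ ∂ₛα₁) + α₁ α₂ (v₁·curl v₂ + v₂·curl v₁)`,
and `v₁·curl v₂ + v₂·curl v₁ = 2 Ωₙ + (μ₁ + μ₂) Ωₙᵦ + 2 μ₁ μ₂ Ωᵦ - ∂ₛμ₁ - ∂ₛμ₂`.
The Riccati equations turn the latter into `-(μ₁ - μ₂)² Ωᵦ`, while the hypothesis on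
`ln (α₂ / α₁)` turns the first summand into `α₁ α₂ (μ₁ - μ₂)² Ωᵦ`, so the two cancel.
-/

noncomputable section

/-- Three-dimensional Euclidean space. -/
abbrev E3 : Type := EuclideanSpace ℝ (Fin 3)

/-- The Euclidean dot product on ℝ³. -/
def dot (u v : E3) : ℝ := ∑ i, u i * v i

/-- The cross product on ℝ³. -/
def cross (u v : E3) : E3 :=
  (WithLp.equiv 2 (Fin 3 → ℝ)).symm
    ![u 1 * v 2 - u 2 * v 1, u 2 * v 0 - u 0 * v 2, u 0 * v 1 - u 1 * v 0]

/-- Partial derivative of a scalar function in the `i`-th coordinate direction. -/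
def pd (i : Fin 3) (f : E3 → ℝ) (x : E3) : ℝ :=
  fderiv ℝ f x (EuclideanSpace.single i 1)

/-- The gradient ∇f of a scalar function. -/
def grad (f : E3 → ℝ) (x : E3) : E3 :=
  (WithLp.equiv 2 (Fin 3 → ℝ)).symm ![pd 0 f x, pd 1 f x, pd 2 f x]

/-- The curl ∇×F of a vector field. -/
def curl (F : E3 → E3) (x : E3) : E3 :=
  (WithLp.equiv 2 (Fin 3 → ℝ)).symm
    ![pd 1 (fun y => F y 2) x - pd 2 (fun y => F y 1) x,
      pd 2 (fun y => F y 0) x - pd 0 (fun y => F y 2) x,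
      pd 0 (fun y => F y 1) x - pd 1 (fun y => F y 0) x]

/-- Directional derivative ∂ₛ f = t·∇f of a scalar function along a vector field t. -/
def ds (t : E3 → E3) (f : E3 → ℝ) (x : E3) : ℝ := dot (t x) (grad f x)

/-- Componentwise directional derivative (u·∇)w of a vector field w along u. -/
def dirDeriv (u w : E3 → E3) (x : E3) : E3 :=
  (WithLp.equiv 2 (Fin 3 → ℝ)).symm
    ![fderiv ℝ (fun y => w y 0) x (u x),
      fderiv ℝ (fun y => w y 1) x (u x),
      fderiv ℝ (fun y => w y 2) x (u x)]

/-- Helicity density w·(curl w) of a vector field. -/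
def hel (w : E3 → E3) (x : E3) : ℝ := dot (w x) (curl w x)

/-- Cross-helicity sum n·(curl b) + b·(curl n). -/
def crossHel (n b : E3 → E3) (x : E3) : ℝ :=
  dot (n x) (curl b x) + dot (b x) (curl n x)

/-- A smooth right-handed orthonormal (Serret–Frenet type) frame on U. -/
def IsFrameOn (t n b : E3 → E3) (U : Set E3) : Prop :=
  ContDiffOn ℝ (⊤ : ℕ∞) t U ∧ ContDiffOn ℝ (⊤ : ℕ∞) n U ∧ ContDiffOn ℝ (⊤ : ℕ∞) b U ∧
  ∀ x ∈ U, ‖t x‖ = 1 ∧ ‖n x‖ = 1 ∧ ‖b x‖ = 1 ∧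
    dot (t x) (n x) = 0 ∧ dot (t x) (b x) = 0 ∧ dot (n x) (b x) = 0 ∧
    b x = cross (t x) (n x)

theorem dot_eq (u v : E3) : dot u v = u 0 * v 0 + u 1 * v 1 + u 2 * v 2 := by
  simp [dot, Fin.sum_univ_three]

theorem pd_mul (i : Fin 3) {f g : E3 → ℝ} {x : E3} (hf : DifferentiableAt ℝ f x)
    (hg : DifferentiableAt ℝ g x) :
    pd i (fun y => f y * g y) x = f x * pd i g x + g x * pd i f x := by
  simp [pd, fderiv_fun_mul hf hg]

theorem pd_add (i : Fin 3) {f g : E3 → ℝ} {x : E3} (hf : DifferentiableAt ℝ f x)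
    (hg : DifferentiableAt ℝ g x) :
    pd i (fun y => f y + g y) x = pd i f x + pd i g x := by
  simp [pd, fderiv_fun_add hf hg]

theorem differentiableAt_coord {F : E3 → E3} {x : E3} (hF : DifferentiableAt ℝ F x) (i : Fin 3) :
    DifferentiableAt ℝ (fun y => F y i) x :=
  (differentiableAt_euclidean.1 hF) i

theorem curl_smul {f : E3 → ℝ} {F : E3 → E3} {x : E3} (hf : DifferentiableAt ℝ f x)
    (hF : DifferentiableAt ℝ F x) :
    curl (fun y => f y • F y) x = cross (grad f x) (F x) + f x • curl F x := by
  have h := differentiableAt_coord hF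
  ext i
  fin_cases i <;>
    simp [curl, cross, grad, pd_mul _ hf (h _)] <;> ring

theorem curl_add {F G : E3 → E3} {x : E3} (hF : DifferentiableAt ℝ F x)
    (hG : DifferentiableAt ℝ G x) :
    curl (fun y => F y + G y) x = curl F x + curl G x := by
  have h := differentiableAt_coord hF
  have h' := differentiableAt_coord hG
  ext i
  fin_cases i <;>
    simp [curl, pd_add _ (h _) (h' _)] <;> ring

theorem curl_field {n b : E3 → E3} {α μ : E3 → ℝ} {x : E3} (hn : DifferentiableAt ℝ n x)
    (hb : DifferentiableAt ℝ b x) (hα : DifferentiableAt ℝ α x) (hμ : DifferentiableAt ℝ μ x) :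
    curl (fun y => α y • (n y + μ y • b y)) x
      = cross (grad α x) (n x + μ x • b x)
        + α x • (curl n x + (cross (grad μ x) (b x) + μ x • curl b x)) := by
  rw [curl_smul (F := fun y => n y + μ y • b y) hα (hn.add (hμ.smul hb)),
    curl_add (G := fun y => μ y • b y) hn (hμ.smul hb), curl_smul hμ hb]

theorem pd_log_div (i : Fin 3) {f g : E3 → ℝ} {x : E3} (hf : DifferentiableAt ℝ f x)
    (hg : DifferentiableAt ℝ g x) (hf0 : f x ≠ 0) (hg0 : g x ≠ 0) :
    f x * g x * pd i (fun y => Real.log (f y / g y)) x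
      = g x * pd i f x - f x * pd i g x := by
  -- Near `x` neither function vanishes, so the logarithm of the quotient splits.
  have he : (fun y => Real.log (f y / g y)) =ᶠ[nhds x] fun y => Real.log (f y) - Real.log (g y) := by
    filter_upwards [hf.continuousAt.eventually_ne hf0, hg.continuousAt.eventually_ne hg0]
      with y h1 h2 using Real.log_div h1 h2
  simp only [pd, he.fderiv_eq, fderiv_fun_sub (hf.log hf0) (hg.log hg0), fderiv.log hf hf0,
    fderiv.log hg hg0]
  simp
  field_simp

theorem ds_log_div (t : E3 → E3) {f g : E3 → ℝ} {x : E3} (hf : DifferentiableAt ℝ f x)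
    (hg : DifferentiableAt ℝ g x) (hf0 : f x ≠ 0) (hg0 : g x ≠ 0) :
    f x * g x * ds t (fun y => Real.log (f y / g y)) x
      = g x * ds t f x - f x * ds t g x := by
  have h := fun i => pd_log_div i hf hg hf0 hg0
  simp [ds, dot_eq, grad]
  linear_combination t x 0 * h 0 + t x 1 * h 1 + t x 2 * h 2

/-- In a right-handed orthonormal frame `t = n × b`: this is the expansion
`n × (t × n) = (n·n) t - (n·t) n`. -/
theorem frame_tangent {t n b : E3} (hn : ‖n‖ = 1) (htn : dot t n = 0) (hb : b = cross t n) :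
    t = cross n b := by
  have hn' : n 0 * n 0 + n 1 * n 1 + n 2 * n 2 = 1 := by
    have := EuclideanSpace.real_norm_sq_eq n
    rw [hn, Fin.sum_univ_three] at this
    linarith
  rw [dot_eq] at htn
  subst hb
  ext i
  fin_cases i <;> simp [cross]
  · linear_combination -(t 0) * hn' + n 0 * htn
  · linear_combination -(t 1) * hn' + n 1 * htn
  · linear_combination -(t 2) * hn' + n 2 * htn

/-- The vector algebra behind the compatibility computation: `N`, `B` stand for `curl n`, `curl b`
and `A₁, A₂, M₁, M₂` for the gradients of `α₁, α₂, μ₁, μ₂`. -/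
theorem cross_helicity_expand (n b N B A₁ A₂ M₁ M₂ : E3) (a₁ a₂ m₁ m₂ : ℝ) :
    dot (a₁ • (n + m₁ • b)) (cross A₂ (n + m₂ • b) + a₂ • (N + (cross M₂ b + m₂ • B)))
      + dot (a₂ • (n + m₂ • b)) (cross A₁ (n + m₁ • b) + a₁ • (N + (cross M₁ b + m₁ • B)))
    = (m₁ - m₂) * (a₁ * dot (cross n b) A₂ - a₂ * dot (cross n b) A₁)
      + a₁ * a₂ * (2 * dot n N + (m₁ + m₂) * (dot n B + dot b N) + 2 * m₁ * m₂ * dot b B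
        - dot (cross n b) M₁ - dot (cross n b) M₂) := by
  simp [dot_eq, cross]
  ring

/-- Poisson vectors Jᵢ = αᵢ(n + μᵢ b) built from solutions of the
Riccati equation are compatible provided ∂ₛ ln(α₂/α₁) = (μ₁ − μ₂) Ωᵦ. -/
theorem riccati_poisson_vectors_compatible
    (U : Set E3) (hU : IsOpen U) (t n b : E3 → E3)
    (hframe : IsFrameOn t n b U)
    (hΩb : ∀ x ∈ U, hel b x ≠ 0)
    (α₁ α₂ μ₁ μ₂ : E3 → ℝ)
    (hα₁ : ContDiffOn ℝ (⊤ : ℕ∞) α₁ U) (hα₂ : ContDiffOn ℝ (⊤ : ℕ∞) α₂ U)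
    (hμ₁ : ContDiffOn ℝ (⊤ : ℕ∞) μ₁ U) (hμ₂ : ContDiffOn ℝ (⊤ : ℕ∞) μ₂ U)
    (hα₁0 : ∀ x ∈ U, α₁ x ≠ 0) (hα₂0 : ∀ x ∈ U, α₂ x ≠ 0)
    (hric₁ : ∀ x ∈ U, ds t μ₁ x = hel n x + μ₁ x * crossHel n b x + μ₁ x ^ 2 * hel b x)
    (hric₂ : ∀ x ∈ U, ds t μ₂ x = hel n x + μ₂ x * crossHel n b x + μ₂ x ^ 2 * hel b x)
    (hlog : ∀ x ∈ U, ds t (fun y => Real.log (α₂ y / α₁ y)) x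
        = (μ₁ x - μ₂ x) * hel b x) :
    ∀ x ∈ U,
      dot (α₁ x • (n x + μ₁ x • b x)) (curl (fun y => α₂ y • (n y + μ₂ y • b y)) x)
        + dot (α₂ x • (n x + μ₂ x • b x)) (curl (fun y => α₁ y • (n y + μ₁ y • b y)) x)
        = 0 := by
  intro x hx
  obtain ⟨-, hn, hb, hfr⟩ := hframe
  obtain ⟨-, hn1, -, htn, -, -, hbx⟩ := hfr x hx
  have hU' := hU.mem_nhds hx
  have h0 : ((⊤ : ℕ∞) : WithTop ℕ∞) ≠ 0 := by simp
  have dn := (hn.contDiffAt hU').differentiableAt h0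
  have db := (hb.contDiffAt hU').differentiableAt h0
  have da1 := (hα₁.contDiffAt hU').differentiableAt h0
  have da2 := (hα₂.contDiffAt hU').differentiableAt h0
  have dm1 := (hμ₁.contDiffAt hU').differentiableAt h0
  have dm2 := (hμ₂.contDiffAt hU').differentiableAt h0
  have hL := ds_log_div t da2 da1 (hα₂0 x hx) (hα₁0 x hx)
  rw [hlog x hx] at hL
  have r1 := hric₁ x hx
  have r2 := hric₂ x hx
  rw [curl_field dn db da2 dm2, curl_field dn db da1 dm1, cross_helicity_expand,
    ← frame_tangent hn1 htn hbx]
  simp only [ds, hel, crossHel] at hL r1 r2 ⊢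
  linear_combination -(μ₁ x - μ₂ x) * hL - α₁ x * α₂ x * (r1 + r2)
end
end

section
/- Let (t, n, b) be a smooth right-handed orthonormal frame on an open set U ⊆ ℝ³ with Ω_b = 0 identically on U (so b itself is a Poisson vector), let α be smooth and nowhere zero and μ smooth, and set J = α(n + μb). Then the compatibility condition J·(curl b) + b·(curl J) = 0 holds at a point of U if and only if ∂_s α + α Ω_nb = 0 holds there. -/
/-!
The identity `curl (f w) = f curl w + ∇f × w` gives
`b · curl (α n + αμ b) = α b · curl n + b · (∇α × n) + αμ b · curl b + b · (∇(αμ) × b)`.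
The last term vanishes, the third vanishes because `b · curl b = 0`, and
`b · (∇α × n) = ∇α · (n × b) = ∇α · t` since `n × b = n × (t × n) = t`.
Hence the left-hand side of the compatibility condition equals `∂ₛ α + α Ω_nb`.
-/

noncomputable section

/-- `curl (f w) = f curl w + ∇f × w`, paired with a vector `v`. -/
lemma dot_curl_smul {f : E3 → ℝ} {w : E3 → E3} {x : E3} (v : E3)
    (hf : DifferentiableAt ℝ f x) (hw : DifferentiableAt ℝ w x) :
    dot v (curl (fun y => f y • w y) x)
      = f x * dot v (curl w x) + dot v (cross (grad f x) (w x)) := by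
  have hpd (i j : Fin 3) : pd i (fun y => (f y • w y) j) x
      = f x * pd i (fun y => w y j) x + pd i f x * w x j := by
    have hwj : DifferentiableAt ℝ (fun y => w y j) x := differentiableAt_euclidean.1 hw j
    simp only [pd, PiLp.smul_apply, smul_eq_mul]
    rw [fderiv_fun_mul hf hwj]
    simp [mul_comm]
  simp only [dot, curl, hpd, cross, grad, Fin.sum_univ_three]
  simp
  ring

lemma dot_curl_add {u w : E3 → E3} {x : E3} (v : E3)
    (hu : DifferentiableAt ℝ u x) (hw : DifferentiableAt ℝ w x) :
    dot v (curl (fun y => u y + w y) x) = dot v (curl u x) + dot v (curl w x) := by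
  have hpd (i j : Fin 3) : pd i (fun y => (u y + w y) j) x
      = pd i (fun y => u y j) x + pd i (fun y => w y j) x := by
    have huj : DifferentiableAt ℝ (fun y => u y j) x := differentiableAt_euclidean.1 hu j
    have hwj : DifferentiableAt ℝ (fun y => w y j) x := differentiableAt_euclidean.1 hw j
    simp only [pd, PiLp.add_apply]
    rw [fderiv_fun_add huj hwj]
    simp
  simp only [dot, curl, hpd, Fin.sum_univ_three]
  simp
  ring

lemma dot_cross_eq_zero (v g : E3) : dot v (cross g v) = 0 := by
  simp [dot, cross, Fin.sum_univ_three]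
  ring

/-- For orthonormal `t, n`, one has `n × (t × n) = t`, so the triple product
`(t × n) · (g × n)` is `t · g`. -/
lemma dot_cross_frame {t n : E3} (g : E3) (hn : ‖n‖ = 1) (htn : dot t n = 0) :
    dot (cross t n) (cross g n) = dot t g := by
  have hn2 : n 0 ^ 2 + n 1 ^ 2 + n 2 ^ 2 = 1 := by
    have h := EuclideanSpace.real_norm_sq_eq n
    rw [hn, Fin.sum_univ_three] at h
    linarith
  simp [dot, cross, Fin.sum_univ_three] at htn ⊢
  -- Lagrange: `(t × n) · (g × n) = (t · g)(n · n) - (t · n)(n · g)`.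
  linear_combination (t 0 * g 0 + t 1 * g 1 + t 2 * g 2) * hn2
    - (n 0 * g 0 + n 1 * g 1 + n 2 * g 2) * htn

/-- with Ωᵦ = 0 on U, the compatibility of J = α(n + μb) and b
holds at a point iff ∂ₛα + α Ωₙᵦ = 0 there. -/
theorem compatibility_with_binormal_iff
    (U : Set E3) (hU : IsOpen U) (t n b : E3 → E3)
    (hframe : IsFrameOn t n b U)
    (hΩb : ∀ x ∈ U, hel b x = 0)
    (α μ : E3 → ℝ)
    (hα : ContDiffOn ℝ (⊤ : ℕ∞) α U) (hμ : ContDiffOn ℝ (⊤ : ℕ∞) μ U)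
    (hα0 : ∀ x ∈ U, α x ≠ 0) :
    ∀ x ∈ U,
      (dot (α x • (n x + μ x • b x)) (curl b x)
          + dot (b x) (curl (fun y => α y • (n y + μ y • b y)) x) = 0)
        ↔ (ds t α x + α x * crossHel n b x = 0) := by
  intro x hx
  obtain ⟨-, hnS, hbS, hF⟩ := hframe
  obtain ⟨-, hn1, -, htn, -, -, hbx⟩ := hF x hx
  have hUx := hU.mem_nhds hx
  have hnd : DifferentiableAt ℝ n x := (hnS.contDiffAt hUx).differentiableAt (by simp)
  have hbd : DifferentiableAt ℝ b x := (hbS.contDiffAt hUx).differentiableAt (by simp)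
  have hαd : DifferentiableAt ℝ α x := (hα.contDiffAt hUx).differentiableAt (by simp)
  have hμd : DifferentiableAt ℝ μ x := (hμ.contDiffAt hUx).differentiableAt (by simp)
  have hb0 : dot (b x) (curl b x) = 0 := hΩb x hx
  have hJ : dot (b x) (curl (fun y => α y • (n y + μ y • b y)) x)
      = α x * dot (b x) (curl n x) + ds t α x := by
    have h1 : (fun y => α y • (n y + μ y • b y))
        = fun y => α y • n y + (α y * μ y) • b y := by
      funext y
      rw [smul_add, smul_smul]
    rw [h1, dot_curl_add (u := fun y => α y • n y) (w := fun y => (α y * μ y) • b y) _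
        (hαd.smul hnd) ((hαd.mul hμd).smul hbd),
      dot_curl_smul _ hαd hnd, dot_curl_smul (f := fun y => α y * μ y) _ (hαd.mul hμd) hbd,
      dot_cross_eq_zero, hb0]
    have h2 : dot (b x) (cross (grad α x) (n x)) = ds t α x := by
      rw [hbx]
      exact dot_cross_frame _ hn1 htn
    rw [h2]
    ring
  have hL : dot (α x • (n x + μ x • b x)) (curl b x)
      = α x * dot (n x) (curl b x) + α x * μ x * dot (b x) (curl b x) := by
    simp [dot, Fin.sum_univ_three]
    ring
  have key : dot (α x • (n x + μ x • b x)) (curl b x)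
          + dot (b x) (curl (fun y => α y • (n y + μ y • b y)) x)
      = ds t α x + α x * crossHel n b x := by
    rw [hL, hJ, hb0, crossHel]
    ring
  rw [key]
end
end
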